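/- Let α ∈ [0,1), let G be a connected graph with ρ_α(G) ≥ 2, and let u ∈ V(G). If q ≥ 1 and p ≥ q, then ρ_α(G_{p,q}(u)) ≥ ρ_α(G_{p+q−1,1}(u)), with equality if and only if q = 1. -/

import Mathlib

/-!
Compare `G` with one pendant path of `a + b` new vertices at `u` and `G` with two pendant paths of
`a, b ≥ 1` new vertices at `u`. The second graph arises from the first by replacing the edge between
the path vertices `a` and `a + 1` with an edge from `u` to `a + 1`.

Let `x` be the nonnegative top eigenvector of the first graph, with eigenvalue
`ρ ≥ ρ_α(G) ≥ 2` (`specRad_perron`, `rhoAlpha_le_attach`). By connectedness `x > 0` along the path,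
and the eigenvalue equations there, together with `ρ ≥ 2`, force `x` to decrease strictly from `u`
to the free end (`exists_decreasing_perron`). The quadratic form of `A_α` is the sum over the edges
of `α(s² + t²) + 2(1 - α)st`, where `s, t` are the values at the ends (`form_pathVec`). Moving the
edge replaces the value at the path vertex `a` by the larger value at `u`, so the form strictly
increases while the norm of `x` is unchanged, and the Rayleigh principle gives the strict inequality
(`attach_lt`). For `q = 1` the two graphs coincide.
-/

/-- The spectral radius (largest eigenvalue) of a real symmetric matrix, as the
supremum of its set of real eigenvalues. -/
noncomputable def specRad {n : Type*} [Fintype n] (M : Matrix n n ℝ) : ℝ :=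
  sSup {t : ℝ | ∃ v : n → ℝ, v ≠ 0 ∧ M.mulVec v = t • v}

/-- The matrix `A_α(G) = α·D(G) + (1-α)·A(G)`. -/
noncomputable def Aalpha {V : Type*} [Fintype V] [DecidableEq V]
    (α : ℝ) (G : SimpleGraph V) : Matrix V V ℝ :=
  letI := Classical.decRel G.Adj
  α • Matrix.diagonal (fun v => (G.degree v : ℝ)) + (1 - α) • G.adjMatrix ℝ

/-- The `α`-index `ρ_α(G)`: the spectral radius of `A_α(G)`. -/
noncomputable def rhoAlpha {V : Type*} [Fintype V] [DecidableEq V]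
    (α : ℝ) (G : SimpleGraph V) : ℝ :=
  specRad (Aalpha α G)


def attachRel {V : Type*} (H : SimpleGraph V) (u v : V) (a b : ℕ) :
    V ⊕ (Fin a ⊕ Fin b) → V ⊕ (Fin a ⊕ Fin b) → Prop
  | Sum.inl x, Sum.inl y => H.Adj x y
  | Sum.inl x, Sum.inr (Sum.inl i) => x = u ∧ i.val = 0
  | Sum.inl x, Sum.inr (Sum.inr i) => x = v ∧ i.val = 0
  | Sum.inr (Sum.inl i), Sum.inr (Sum.inl j) => i.val + 1 = j.val
  | Sum.inr (Sum.inr i), Sum.inr (Sum.inr j) => i.val + 1 = j.val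
  | _, _ => False

/-- The graph `H_{a+1,b+1}(u,v)` obtained from `H` by attaching a path with `a + 1`
vertices to `u` (its `a` new vertices being `Fin a`) and a path with `b + 1`
vertices to `v` (its `b` new vertices being `Fin b`); attaching a path means
identifying one of its end-vertices with the root vertex. -/
def attachTwoPaths {V : Type*} (H : SimpleGraph V) (u v : V) (a b : ℕ) :
    SimpleGraph (V ⊕ (Fin a ⊕ Fin b)) :=
  SimpleGraph.fromRel (attachRel H u v a b)

section Helpers

open Matrix

/-! ### Rayleigh quotients and the spectral radius -/

theorem exists_rayleigh_max {n : Type*} [Fintype n] [Nonempty n] (M : Matrix n n ℝ) :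
    ∃ (m : ℝ) (x : n → ℝ), x ≠ 0 ∧ x ⬝ᵥ M *ᵥ x = m * (x ⬝ᵥ x) ∧
      ∀ y : n → ℝ, y ⬝ᵥ M *ᵥ y ≤ m * (y ⬝ᵥ y) := by
  classical
  have hne : (Metric.sphere (0 : EuclideanSpace ℝ n) 1).Nonempty :=
    NormedSpace.sphere_nonempty.2 zero_le_one
  have hcont : Continuous fun x : EuclideanSpace ℝ n => x.ofLp ⬝ᵥ M *ᵥ x.ofLp := by
    simp only [dotProduct, mulVec]
    fun_prop
  obtain ⟨x, hx, hmax⟩ := (isCompact_sphere (0 : EuclideanSpace ℝ n) 1).exists_isMaxOn hne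
    hcont.continuousOn
  have hnorm : ∀ y : EuclideanSpace ℝ n, y.ofLp ⬝ᵥ y.ofLp = ‖y‖ ^ 2 := by
    intro y
    rw [EuclideanSpace.norm_sq_eq]
    simp [dotProduct, sq]
  have hx1 : ‖x‖ = 1 := by simpa using hx
  refine ⟨x.ofLp ⬝ᵥ M *ᵥ x.ofLp, x.ofLp, ?_, ?_, ?_⟩
  · intro h0
    have := hnorm x
    rw [h0, hx1] at this
    simp at this
  · rw [hnorm, hx1]; ring
  · intro y
    by_cases hy : y = 0
    · simp [hy]
    set z : EuclideanSpace ℝ n := WithLp.toLp 2 y with hz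
    have hz0 : ‖z‖ ≠ 0 := by
      rw [norm_ne_zero_iff]
      intro h
      apply hy
      have := congrArg WithLp.ofLp h
      simpa [hz] using this
    have hmem : (‖z‖⁻¹ • z) ∈ Metric.sphere (0 : EuclideanSpace ℝ n) 1 := by
      simp [norm_smul, hz0]
    have h := hmax hmem
    simp only [Set.mem_ofPred_eq, WithLp.ofLp_smul, mulVec_smul, smul_dotProduct,
      dotProduct_smul, smul_eq_mul] at h
    have hyy : y ⬝ᵥ y = ‖z‖ ^ 2 := hnorm z
    rw [hyy]
    have hpos : 0 < ‖z‖ := lt_of_le_of_ne (norm_nonneg _) (Ne.symm hz0)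
    have h2 := mul_le_mul_of_nonneg_right h (sq_nonneg ‖z‖)
    calc y ⬝ᵥ M *ᵥ y = ‖z‖⁻¹ * (‖z‖⁻¹ * (z.ofLp ⬝ᵥ M *ᵥ z.ofLp)) * ‖z‖ ^ 2 := by
          field_simp
          rfl
      _ ≤ _ := h2

/-- A vector attaining the maximum `m` of the Rayleigh quotient lies in the kernel of the positive
semidefinite matrix `m - M`. -/
theorem mulVec_eq_of_rayleigh {n : Type*} [Fintype n] [DecidableEq n] {M : Matrix n n ℝ}
    (hM : M.IsSymm) {m : ℝ} (hm : ∀ y : n → ℝ, y ⬝ᵥ M *ᵥ y ≤ m * (y ⬝ᵥ y))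
    {x : n → ℝ} (hx : m * (x ⬝ᵥ x) ≤ x ⬝ᵥ M *ᵥ x) : M *ᵥ x = m • x := by
  have hB : (m • (1 : Matrix n n ℝ) - M).PosSemidef := by
    refine Matrix.PosSemidef.of_dotProduct_mulVec_nonneg ?_ ?_
    · rw [Matrix.IsHermitian, conjTranspose_eq_transpose_of_trivial]
      simp [hM.eq]
    · intro y
      have := hm y
      simp [sub_mulVec, smul_mulVec]
      linarith
  have h := (hB.dotProduct_mulVec_zero_iff x).1 (by
    have := hm x
    simp [sub_mulVec, smul_mulVec]
    linarith)
  simp [sub_mulVec, smul_mulVec] at h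
  exact (sub_eq_zero.1 h).symm

/-- For a symmetric entrywise nonnegative matrix, `specRad` bounds the Rayleigh quotient and is
attained at a nonnegative eigenvector, namely the entrywise absolute value of any maximizer. -/
theorem specRad_perron {n : Type*} [Fintype n] [DecidableEq n] [Nonempty n] {M : Matrix n n ℝ}
    (hM : M.IsSymm) (hpos : ∀ i j, 0 ≤ M i j) :
    (∀ y : n → ℝ, y ⬝ᵥ M *ᵥ y ≤ specRad M * (y ⬝ᵥ y)) ∧
      ∃ x : n → ℝ, x ≠ 0 ∧ (∀ i, 0 ≤ x i) ∧ M *ᵥ x = specRad M • x := by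
  obtain ⟨m, x, hx0, hxm, hm⟩ := exists_rayleigh_max M
  have hs : specRad M = m := by
    refine IsGreatest.csSup_eq ⟨⟨x, hx0, mulVec_eq_of_rayleigh hM hm hxm.ge⟩, ?_⟩
    rintro t ⟨v, hv, hvt⟩
    have h := hm v
    rw [hvt, dotProduct_smul, smul_eq_mul] at h
    have hvv : 0 < v ⬝ᵥ v :=
      lt_of_le_of_ne (by simpa using dotProduct_star_self_nonneg v)
        (fun h => hv (dotProduct_self_eq_zero.1 h.symm))
    exact le_of_mul_le_mul_right h hvv
  rw [hs]
  refine ⟨hm, fun i => |x i|, ?_, fun i => abs_nonneg _, ?_⟩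
  · intro h
    apply hx0
    funext i
    simpa using congrFun h i
  · apply mulVec_eq_of_rayleigh hM hm
    have h1 : (fun i => |x i|) ⬝ᵥ (fun i => |x i|) = x ⬝ᵥ x := by
      simp [dotProduct]
    rw [h1, ← hxm]
    simp only [dotProduct, mulVec, Finset.mul_sum]
    refine Finset.sum_le_sum fun i _ => Finset.sum_le_sum fun j _ => ?_
    calc x i * (M i j * x j) ≤ |x i * (M i j * x j)| := le_abs_self _
      _ = |x i| * (M i j * |x j|) := by rw [abs_mul, abs_mul, abs_of_nonneg (hpos i j)]

/-! ### The quadratic form of `A_α` on a graph with attached paths -/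

theorem Aalpha_isSymm {V : Type*} [Fintype V] [DecidableEq V] (α : ℝ) (G : SimpleGraph V) :
    (Aalpha α G).IsSymm := by
  classical
  unfold Aalpha
  refine Matrix.IsSymm.add ?_ ?_
  · exact (Matrix.isSymm_diagonal _).smul _
  · exact Matrix.IsSymm.smul (SimpleGraph.isSymm_adjMatrix _) _

theorem Aalpha_nonneg {V : Type*} [Fintype V] [DecidableEq V] {α : ℝ} (h0 : 0 ≤ α) (h1 : α < 1)
    (G : SimpleGraph V) (i j : V) : 0 ≤ Aalpha α G i j := by
  classical
  have hβ : 0 ≤ 1 - α := by linarith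
  simp only [Aalpha, Matrix.add_apply, Matrix.smul_apply, smul_eq_mul, Matrix.diagonal_apply,
    SimpleGraph.adjMatrix_apply]
  split_ifs <;> positivity

open Classical in
theorem Aalpha_mulVec_apply {V : Type*} [Fintype V] [DecidableEq V] (α : ℝ) (G : SimpleGraph V)
    (x : V → ℝ) (v : V) :
    (Aalpha α G *ᵥ x) v = ∑ w, if G.Adj v w then α * x v + (1 - α) * x w else 0 := by
  simp only [Aalpha, add_mulVec, smul_mulVec, Pi.add_apply, Pi.smul_apply, mulVec_diagonal,
    SimpleGraph.adjMatrix_mulVec_apply, smul_eq_mul]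
  rw [← Finset.sum_filter, Finset.sum_add_distrib, Finset.sum_const, ← Finset.mul_sum,
    ← SimpleGraph.neighborFinset_eq_filter, SimpleGraph.card_neighborFinset_eq_degree, nsmul_eq_mul]
  ring_nf

/-- The contribution of an edge with end values `s`, `t` to the quadratic form of `A_α`. -/
def edgeForm (α s t : ℝ) : ℝ := α * (s ^ 2 + t ^ 2) + 2 * (1 - α) * (s * t)

/-- The vector on `attachTwoPaths G u u a b` with values `f` on `G` and values `y 1, y 2, …`,
`z 1, z 2, …` along the new vertices of the two paths. The values `y 0` and `z 0` are not used
here; elsewhere they equal `f u`, so that `y` and `z` list the values along each whole path. -/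
def pathVec {V : Type*} (f : V → ℝ) (y z : ℕ → ℝ) (a b : ℕ) : V ⊕ (Fin a ⊕ Fin b) → ℝ :=
  Sum.elim f (Sum.elim (fun i => y (i + 1)) (fun i => z (i + 1)))

section adj
variable {V : Type*} (G : SimpleGraph V) (u : V) (a b : ℕ)

theorem att_adj_VV (v w : V) :
    (attachTwoPaths G u u a b).Adj (Sum.inl v) (Sum.inl w) ↔ G.Adj v w := by
  simp only [attachTwoPaths, SimpleGraph.fromRel_adj, attachRel, ne_eq, Sum.inl.injEq]
  constructor
  · rintro ⟨_, h | h⟩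
    exacts [h, h.symm]
  · exact fun h => ⟨h.ne, Or.inl h⟩

theorem att_adj_VA (v : V) (i : Fin a) :
    (attachTwoPaths G u u a b).Adj (Sum.inl v) (Sum.inr (Sum.inl i)) ↔ v = u ∧ i.val = 0 := by
  simp [attachTwoPaths, SimpleGraph.fromRel_adj, attachRel]

theorem att_adj_VB (v : V) (i : Fin b) :
    (attachTwoPaths G u u a b).Adj (Sum.inl v) (Sum.inr (Sum.inr i)) ↔ v = u ∧ i.val = 0 := by
  simp [attachTwoPaths, SimpleGraph.fromRel_adj, attachRel]

theorem att_adj_AV (v : V) (i : Fin a) :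
    (attachTwoPaths G u u a b).Adj (Sum.inr (Sum.inl i)) (Sum.inl v) ↔ v = u ∧ i.val = 0 := by
  simp [attachTwoPaths, SimpleGraph.fromRel_adj, attachRel]

theorem att_adj_BV (v : V) (i : Fin b) :
    (attachTwoPaths G u u a b).Adj (Sum.inr (Sum.inr i)) (Sum.inl v) ↔ v = u ∧ i.val = 0 := by
  simp [attachTwoPaths, SimpleGraph.fromRel_adj, attachRel]

theorem att_adj_AA (i j : Fin a) :
    (attachTwoPaths G u u a b).Adj (Sum.inr (Sum.inl i)) (Sum.inr (Sum.inl j)) ↔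
      i.val + 1 = j.val ∨ j.val + 1 = i.val := by
  simp only [attachTwoPaths, SimpleGraph.fromRel_adj, attachRel, ne_eq, Sum.inr.injEq,
    Sum.inl.injEq, Fin.ext_iff]
  omega

theorem att_adj_BB (i j : Fin b) :
    (attachTwoPaths G u u a b).Adj (Sum.inr (Sum.inr i)) (Sum.inr (Sum.inr j)) ↔
      i.val + 1 = j.val ∨ j.val + 1 = i.val := by
  simp only [attachTwoPaths, SimpleGraph.fromRel_adj, attachRel, ne_eq, Sum.inr.injEq,
    Fin.ext_iff]
  omega

theorem att_adj_AB (i : Fin a) (j : Fin b) :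
    ¬ (attachTwoPaths G u u a b).Adj (Sum.inr (Sum.inl i)) (Sum.inr (Sum.inr j)) := by
  simp [attachTwoPaths, SimpleGraph.fromRel_adj, attachRel]

theorem att_adj_BA (i : Fin b) (j : Fin a) :
    ¬ (attachTwoPaths G u u a b).Adj (Sum.inr (Sum.inr i)) (Sum.inr (Sum.inl j)) := by
  simp [attachTwoPaths, SimpleGraph.fromRel_adj, attachRel]

end adj

theorem sum_adjacent_split {a : ℕ} (g : ℕ → ℕ → ℝ) (i : Fin a) :
    (∑ j : Fin a, if i.val + 1 = j.val ∨ j.val + 1 = i.val then g i j else 0) =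
      (if i.val + 1 < a then g i (i + 1) else 0) + if i.val = 0 then 0 else g i (i - 1) := by
  have hterm : ∀ j : Fin a, (if i.val + 1 = j.val ∨ j.val + 1 = i.val then g i j else 0) =
      (if i.val + 1 = j.val then g i (i + 1) else 0) +
        if j.val + 1 = i.val then g i (i - 1) else 0 := by
    intro j
    by_cases h1 : i.val + 1 = j.val
    · have h2 : ¬ j.val + 1 = i.val := by omega
      simp [h1, h2]
    · by_cases h2 : j.val + 1 = i.val
      · have h3 : j.val = i.val - 1 := by omega
        rw [if_pos (Or.inr h2), if_neg h1, if_pos h2, zero_add, h3]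
      · simp [h1, h2]
  rw [Finset.sum_congr rfl fun j _ => hterm j, Finset.sum_add_distrib]
  congr 1
  · split_ifs with h
    · rw [Finset.sum_eq_single (⟨i + 1, h⟩ : Fin a)]
      · simp
      · intro j _ hj
        rw [if_neg]
        intro h'
        exact hj (Fin.ext h'.symm)
      · simp
    · refine Finset.sum_eq_zero fun j _ => if_neg ?_
      have := j.isLt
      omega
  · split_ifs with h
    · refine Finset.sum_eq_zero fun j _ => if_neg (by omega)
    · have hlt := i.isLt
      rw [Finset.sum_eq_single (⟨i - 1, by omega⟩ : Fin a)]
      · rw [if_pos]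
        simp only
        omega
      · intro j _ hj
        rw [if_neg]
        intro h'
        exact hj (Fin.ext (by simp only; omega))
      · simp

/-- Collecting the contributions of a path, seen from the root (first sum) and from the new
vertices (second sum), edge by edge. -/
theorem path_sum (α : ℝ) (y : ℕ → ℝ) (a : ℕ) :
    (∑ i ∈ Finset.range a, if i = 0 then α * y 0 ^ 2 + (1 - α) * (y 0 * y 1) else 0) +
      ∑ i ∈ Finset.range a, ((α * y (i + 1) ^ 2 + (1 - α) * (y (i + 1) * y i)) +
        if i + 1 < a then α * y (i + 1) ^ 2 + (1 - α) * (y (i + 1) * y (i + 2)) else 0) =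
      ∑ i ∈ Finset.range a, edgeForm α (y i) (y (i + 1)) := by
  cases a with
  | zero => simp
  | succ a =>
    rw [Finset.sum_add_distrib]
    have h1 : (∑ i ∈ Finset.range (a + 1),
        if i = 0 then α * y 0 ^ 2 + (1 - α) * (y 0 * y 1) else 0) =
        α * y 0 ^ 2 + (1 - α) * (y 0 * y 1) := by simp
    have h2 : (∑ i ∈ Finset.range (a + 1),
        if i + 1 < a + 1 then α * y (i + 1) ^ 2 + (1 - α) * (y (i + 1) * y (i + 2)) else 0) =
        ∑ i ∈ Finset.range a, (α * y (i + 1) ^ 2 + (1 - α) * (y (i + 1) * y (i + 2))) := by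
      rw [Finset.sum_range_succ, if_neg (by omega), add_zero]
      refine Finset.sum_congr rfl fun i hi => if_pos ?_
      have := Finset.mem_range.1 hi
      omega
    have h3 := Finset.sum_range_succ'
      (fun i => α * y i ^ 2 + (1 - α) * (y i * y (i + 1))) a
    have h4 : ∑ i ∈ Finset.range (a + 1), edgeForm α (y i) (y (i + 1)) =
        ∑ i ∈ Finset.range (a + 1), (α * y (i + 1) ^ 2 + (1 - α) * (y (i + 1) * y i)) +
        ∑ i ∈ Finset.range (a + 1), (α * y i ^ 2 + (1 - α) * (y i * y (i + 1))) := by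
      rw [← Finset.sum_add_distrib]
      refine Finset.sum_congr rfl fun i _ => ?_
      unfold edgeForm
      ring
    rw [h1, h2, h4, h3]
    simp only [zero_add]
    ring

theorem mulVec_path {V : Type*} [Fintype V] [DecidableEq V] (α : ℝ) (G : SimpleGraph V) (u : V)
    (a b : ℕ) (f : V → ℝ) (y z : ℕ → ℝ) (hy : y 0 = f u) (i : Fin a) :
    (Aalpha α (attachTwoPaths G u u a b) *ᵥ pathVec f y z a b) (Sum.inr (Sum.inl i)) =
      (α * y (i + 1) + (1 - α) * y i) +
        if i.val + 1 < a then α * y (i + 1) + (1 - α) * y (i + 2) else 0 := by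
  classical
  rw [Aalpha_mulVec_apply, Fintype.sum_sum_type, Fintype.sum_sum_type]
  simp only [att_adj_AV, att_adj_AA, att_adj_AB, if_false, Finset.sum_const_zero, add_zero]
  simp only [pathVec, Sum.elim_inl, Sum.elim_inr]
  rw [sum_adjacent_split (fun i j => α * y (i + 1) + (1 - α) * y (j + 1)) i]
  by_cases h : i.val = 0
  · simp [h, hy]
  · have h' : i.val - 1 + 1 = i.val := by omega
    simp [h, h']; ring

theorem mulVec_path' {V : Type*} [Fintype V] [DecidableEq V] (α : ℝ) (G : SimpleGraph V) (u : V)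
    (a b : ℕ) (f : V → ℝ) (y z : ℕ → ℝ) (hz : z 0 = f u) (i : Fin b) :
    (Aalpha α (attachTwoPaths G u u a b) *ᵥ pathVec f y z a b) (Sum.inr (Sum.inr i)) =
      (α * z (i + 1) + (1 - α) * z i) +
        if i.val + 1 < b then α * z (i + 1) + (1 - α) * z (i + 2) else 0 := by
  classical
  rw [Aalpha_mulVec_apply, Fintype.sum_sum_type, Fintype.sum_sum_type]
  simp only [att_adj_BV, att_adj_BB, att_adj_BA, if_false, Finset.sum_const_zero, zero_add]
  simp only [pathVec, Sum.elim_inl, Sum.elim_inr]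
  rw [sum_adjacent_split (fun i j => α * z (i + 1) + (1 - α) * z (j + 1)) i]
  by_cases h : i.val = 0
  · simp [h, hz]
  · have h' : i.val - 1 + 1 = i.val := by omega
    simp [h, h']; ring

theorem mulVec_base {V : Type*} [Fintype V] [DecidableEq V] (α : ℝ) (G : SimpleGraph V) (u : V)
    (a b : ℕ) (f : V → ℝ) (y z : ℕ → ℝ) (v : V) :
    (Aalpha α (attachTwoPaths G u u a b) *ᵥ pathVec f y z a b) (Sum.inl v) =
      (Aalpha α G *ᵥ f) v +
        ((∑ i ∈ Finset.range a,
          if v = u then if i = 0 then α * f u + (1 - α) * y 1 else 0 else 0) +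
        ∑ i ∈ Finset.range b,
          if v = u then if i = 0 then α * f u + (1 - α) * z 1 else 0 else 0) := by
  classical
  rw [Aalpha_mulVec_apply, Aalpha_mulVec_apply, Fintype.sum_sum_type, Fintype.sum_sum_type]
  simp only [att_adj_VV, att_adj_VA, att_adj_VB]
  simp only [pathVec, Sum.elim_inl, Sum.elim_inr]
  congr 2
  · rw [← Fin.sum_univ_eq_sum_range
      (fun i => if v = u then if i = 0 then α * f u + (1 - α) * y 1 else 0 else 0)]
    refine Finset.sum_congr rfl fun i _ => ?_
    by_cases h : v = u <;> by_cases h' : i.val = 0 <;> simp [h, h']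
  · rw [← Fin.sum_univ_eq_sum_range
      (fun i => if v = u then if i = 0 then α * f u + (1 - α) * z 1 else 0 else 0)]
    refine Finset.sum_congr rfl fun i _ => ?_
    by_cases h : v = u <;> by_cases h' : i.val = 0 <;> simp [h, h']

theorem form_pathVec {V : Type*} [Fintype V] [DecidableEq V] (α : ℝ) (G : SimpleGraph V) (u : V)
    (a b : ℕ) (f : V → ℝ) (y z : ℕ → ℝ) (hy : y 0 = f u) (hz : z 0 = f u) :
    pathVec f y z a b ⬝ᵥ (Aalpha α (attachTwoPaths G u u a b) *ᵥ pathVec f y z a b) =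
      f ⬝ᵥ (Aalpha α G *ᵥ f) + (∑ i ∈ Finset.range a, edgeForm α (y i) (y (i + 1)) +
        ∑ i ∈ Finset.range b, edgeForm α (z i) (z (i + 1))) := by
  rw [dotProduct, Fintype.sum_sum_type, Fintype.sum_sum_type]
  simp only [mulVec_base, mulVec_path α G u a b f y z hy, mulVec_path' α G u a b f y z hz]
  simp only [pathVec, Sum.elim_inl, Sum.elim_inr, mul_add, Finset.sum_add_distrib]
  rw [← path_sum α y a, ← path_sum α z b]
  have hb : ∀ (w : ℕ → ℝ) (c : ℕ), w 0 = f u →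
      (∑ v, f v * ∑ i ∈ Finset.range c,
        if v = u then if i = 0 then α * f u + (1 - α) * w 1 else 0 else 0) =
      ∑ i ∈ Finset.range c, if i = 0 then α * w 0 ^ 2 + (1 - α) * (w 0 * w 1) else 0 := by
    intro w c hw
    rw [Finset.sum_eq_single u]
    · rw [Finset.mul_sum]
      refine Finset.sum_congr rfl fun i _ => ?_
      by_cases h : i = 0
      · simp [h, hw]; ring
      · simp [h]
    · intro v _ hv
      simp [hv]
    · simp
  have hp : ∀ (w : ℕ → ℝ) (c : ℕ),
      (∑ i : Fin c, w (i + 1) * (α * w (i + 1))) + (∑ i : Fin c, w (i + 1) * ((1 - α) * w i)) +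
      (∑ i : Fin c, w (i + 1) *
        if i.val + 1 < c then α * w (i + 1) + (1 - α) * w (i + 2) else 0) =
      ∑ i ∈ Finset.range c, ((α * w (i + 1) ^ 2 + (1 - α) * (w (i + 1) * w i)) +
        if i + 1 < c then α * w (i + 1) ^ 2 + (1 - α) * (w (i + 1) * w (i + 2)) else 0) := by
    intro w c
    rw [← Fin.sum_univ_eq_sum_range (fun i =>
      ((α * w (i + 1) ^ 2 + (1 - α) * (w (i + 1) * w i)) +
        if i + 1 < c then α * w (i + 1) ^ 2 + (1 - α) * (w (i + 1) * w (i + 2)) else 0)),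
      ← Finset.sum_add_distrib, ← Finset.sum_add_distrib]
    refine Finset.sum_congr rfl fun i _ => ?_
    split_ifs <;> ring
  rw [hb y a hy, hb z b hz, hp y a, hp z b]
  simp only [dotProduct]
  ring

theorem normSq_pathVec {V : Type*} [Fintype V] (a b : ℕ) (f : V → ℝ) (y z : ℕ → ℝ) :
    pathVec f y z a b ⬝ᵥ pathVec f y z a b =
      f ⬝ᵥ f + (∑ i ∈ Finset.range a, y (i + 1) ^ 2 + ∑ i ∈ Finset.range b, z (i + 1) ^ 2) := by
  rw [dotProduct, Fintype.sum_sum_type, Fintype.sum_sum_type]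
  simp only [pathVec, Sum.elim_inl, Sum.elim_inr]
  rw [← Fin.sum_univ_eq_sum_range (fun i => y (i + 1) ^ 2),
    ← Fin.sum_univ_eq_sum_range (fun i => z (i + 1) ^ 2)]
  simp only [dotProduct, sq]

/-! ### The top eigenvector along a pendant path -/

theorem rhoAlpha_perron {V : Type*} [Fintype V] [DecidableEq V] [Nonempty V] {α : ℝ}
    (h0 : 0 ≤ α) (h1 : α < 1) (G : SimpleGraph V) :
    (∀ y : V → ℝ, y ⬝ᵥ Aalpha α G *ᵥ y ≤ rhoAlpha α G * (y ⬝ᵥ y)) ∧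
      ∃ x : V → ℝ, x ≠ 0 ∧ (∀ i, 0 ≤ x i) ∧ Aalpha α G *ᵥ x = rhoAlpha α G • x :=
  specRad_perron (Aalpha_isSymm α G) (Aalpha_nonneg h0 h1 G)

/-- A zero of a nonnegative eigenvector of `A_α` spreads to the neighbours. -/
theorem eigen_zero_adj {V : Type*} [Fintype V] [DecidableEq V] {α : ℝ} (h0 : 0 ≤ α) (h1 : α < 1)
    {G : SimpleGraph V} {x : V → ℝ} {t : ℝ} (hx : ∀ i, 0 ≤ x i)
    (he : Aalpha α G *ᵥ x = t • x) {v w : V} (hv : x v = 0) (hvw : G.Adj v w) : x w = 0 := by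
  classical
  have h := congrFun he v
  rw [Aalpha_mulVec_apply, Pi.smul_apply, hv, smul_zero] at h
  have hβ : 0 < 1 - α := by linarith
  have hterm := (Finset.sum_eq_zero_iff_of_nonneg (fun w _ => by
    split_ifs
    · have := hx w
      positivity
    · exact le_rfl)).1 h w (Finset.mem_univ w)
  rw [if_pos hvw] at hterm
  have : (1 - α) * x w = 0 := by linarith
  rcases mul_eq_zero.1 this with h | h
  · linarith
  · exact h

theorem edgeForm_nonneg {α s t : ℝ} (h0 : 0 ≤ α) (h1 : α < 1) (hs : 0 ≤ s) (ht : 0 ≤ t) :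
    0 ≤ edgeForm α s t := by
  have hβ : 0 ≤ 1 - α := by linarith
  unfold edgeForm
  positivity

theorem edgeForm_lt {α r s t : ℝ} (h0 : 0 ≤ α) (h1 : α < 1) (hr : 0 ≤ r) (hrs : r < s)
    (ht : 0 < t) : edgeForm α r t < edgeForm α s t := by
  have hβ : 0 < 1 - α := by linarith
  have ha : α * r ^ 2 ≤ α * s ^ 2 := by gcongr
  have hb : (1 - α) * (r * t) < (1 - α) * (s * t) := by gcongr
  unfold edgeForm
  linarith

/-- Test the Rayleigh quotient with a nonnegative top eigenvector of `G` extended by zero. -/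
theorem rhoAlpha_le_attach {V : Type*} [Fintype V] [DecidableEq V] [Nonempty V] {α : ℝ}
    (h0 : 0 ≤ α) (h1 : α < 1) (G : SimpleGraph V) (u : V) (a b : ℕ) :
    rhoAlpha α G ≤ rhoAlpha α (attachTwoPaths G u u a b) := by
  obtain ⟨-, f, hf0, hf, hfe⟩ := rhoAlpha_perron h0 h1 G
  set y : ℕ → ℝ := fun k => if k = 0 then f u else 0 with hy
  have hy0 : ∀ k, 0 ≤ y k := by
    intro k
    simp only [hy]
    split_ifs
    exacts [hf u, le_rfl]
  have h := (rhoAlpha_perron h0 h1 (attachTwoPaths G u u a b)).1 (pathVec f y y a b)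
  rw [form_pathVec α G u a b f y y (by simp [hy]) (by simp [hy]), normSq_pathVec, hfe,
    dotProduct_smul, smul_eq_mul] at h
  have hs : ∀ c, 0 ≤ ∑ i ∈ Finset.range c, edgeForm α (y i) (y (i + 1)) := fun c =>
    Finset.sum_nonneg fun i _ => edgeForm_nonneg h0 h1 (hy0 _) (hy0 _)
  have hz : ∀ c, ∑ i ∈ Finset.range c, y (i + 1) ^ 2 = 0 := by
    intro c
    simp [hy]
  rw [hz, hz, add_zero, add_zero] at h
  have hff : 0 < f ⬝ᵥ f :=
    lt_of_le_of_ne (by simpa using dotProduct_star_self_nonneg f)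
      (fun h => hf0 (dotProduct_self_eq_zero.1 h.symm))
  refine le_of_mul_le_mul_right ?_ hff
  linarith [hs a, hs b]

/-- The top eigenvector of `G` with one pendant path of `n` new vertices: it takes values `f` on
`G`, and positive, strictly decreasing values `y 0 = f u, y 1, …, y n` along the path. The argument
`z` of `pathVec` plays no role, as the second path is trivial. -/
theorem exists_decreasing_perron {V : Type*} [Fintype V] [DecidableEq V] {α : ℝ}
    (h0 : 0 ≤ α) (h1 : α < 1) (G : SimpleGraph V) (hconn : G.Connected)
    (hρ : 2 ≤ rhoAlpha α G) (u : V) (n : ℕ) :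
    ∃ (f : V → ℝ) (y : ℕ → ℝ), y 0 = f u ∧ (∀ k ≤ n, 0 < y k) ∧ (∀ k < n, y (k + 1) < y k) ∧
      ∀ z, Aalpha α (attachTwoPaths G u u n 0) *ᵥ pathVec f y z n 0 =
        rhoAlpha α (attachTwoPaths G u u n 0) • pathVec f y z n 0 := by
  have := hconn.nonempty
  obtain ⟨-, x, hx0, hx, hxe⟩ := rhoAlpha_perron h0 h1 (attachTwoPaths G u u n 0)
  have hr : 2 ≤ rhoAlpha α (attachTwoPaths G u u n 0) :=
    hρ.trans (rhoAlpha_le_attach h0 h1 G u n 0)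
  set r := rhoAlpha α (attachTwoPaths G u u n 0)
  have hβ : 0 < 1 - α := by linarith
  set f : V → ℝ := fun v => x (Sum.inl v) with hf
  obtain ⟨y, hy0, hyx, hynn⟩ : ∃ y : ℕ → ℝ, y 0 = f u ∧
      (∀ i : Fin n, y (i + 1) = x (Sum.inr (Sum.inl i))) ∧ ∀ k, 0 ≤ y k := by
    refine ⟨fun k => Nat.casesOn k (f u)
      fun k => if h : k < n then x (Sum.inr (Sum.inl ⟨k, h⟩)) else 0, rfl, ?_, ?_⟩
    · intro i
      simp
    · rintro (_ | k)
      · exact hx _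
      · dsimp only
        split_ifs
        exacts [hx _, le_rfl]
  have hxv : ∀ z, pathVec f y z n 0 = x := by
    intro z
    funext w
    rcases w with v | i | i
    · rfl
    · exact hyx i
    · exact i.elim0
  -- The eigenvalue equation at the new vertex carrying the value `y (k + 1)`.
  have heq : ∀ k < n, r * y (k + 1) = (α * y (k + 1) + (1 - α) * y k) +
      if k + 1 < n then α * y (k + 1) + (1 - α) * y (k + 2) else 0 := by
    intro k hk
    have h := congrFun hxe (Sum.inr (Sum.inl ⟨k, hk⟩))
    rw [← hxv 0, mulVec_path α G u n 0 f y 0 hy0] at h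
    exact h.symm
  have hstep0 : ∀ k < n, y (k + 1) = 0 → y k = 0 := by
    intro k hk h
    have h2 := heq k hk
    rw [h] at h2
    have h3 : 0 ≤ (if k + 1 < n then α * 0 + (1 - α) * y (k + 2) else 0) := by
      split_ifs
      · have := hynn (k + 2)
        positivity
      · exact le_rfl
    have h4 : (1 - α) * y k ≤ 0 := by linarith
    exact le_antisymm (nonpos_of_mul_nonpos_right h4 hβ) (hynn k)
  -- If `y 0 = x u` vanished, the zero would spread through `G` and along the path.
  have hpos0 : 0 < y 0 := by
    refine lt_of_le_of_ne (hynn 0) fun h => hx0 ?_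
    have hfu : x (Sum.inl u) = 0 := by rw [h, hy0]
    have hwalk : ∀ v w, G.Walk v w → x (Sum.inl w) = 0 → x (Sum.inl v) = 0 := by
      intro v w p hw
      induction p with
      | nil => exact hw
      | cons hadj _ ih =>
        exact eigen_zero_adj h0 h1 hx hxe (ih hw) ((att_adj_VV G u n 0 _ _).2 hadj.symm)
    have hG : ∀ v, x (Sum.inl v) = 0 := by
      intro v
      obtain ⟨p⟩ := hconn.preconnected v u
      exact hwalk v u p hfu
    have hP : ∀ k (hk : k < n), x (Sum.inr (Sum.inl ⟨k, hk⟩)) = 0 := by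
      intro k
      induction k with
      | zero =>
        intro hk
        exact eigen_zero_adj h0 h1 hx hxe hfu ((att_adj_VA G u n 0 u _).2 ⟨rfl, rfl⟩)
      | succ k ih =>
        intro hk
        exact eigen_zero_adj h0 h1 hx hxe (ih (by omega))
          ((att_adj_AA G u n 0 _ _).2 (Or.inl rfl))
    funext w
    rcases w with v | i | i
    · exact hG v
    · exact hP i i.isLt
    · exact i.elim0
  have hpos : ∀ k ≤ n, 0 < y k := by
    intro k
    induction k with
    | zero => exact fun _ => hpos0
    | succ k ih =>
      intro hk
      refine lt_of_le_of_ne (hynn _) fun h => ?_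
      exact (ih (by omega)).ne' (hstep0 k (by omega) h.symm)
  refine ⟨f, y, hy0, hpos, ?_, fun z => by rw [hxv]; exact hxe⟩
  -- Downward induction from the free end of the path. At the end, `(r - α) yₙ = (1 - α) yₙ₋₁`
  -- with `r - α > 1 - α`; inside, `r - 2α ≥ 2(1 - α)` makes `y` convex.
  have hdec : ∀ d k, k + d + 1 = n → y (k + 1) < y k := by
    intro d
    induction d with
    | zero =>
      intro k hk
      have h2 := heq k (by omega)
      rw [if_neg (by omega)] at h2
      have h3 := hpos (k + 1) (by omega)
      nlinarith
    | succ d ih =>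
      intro k hk
      have h2 := heq k (by omega)
      rw [if_pos (by omega)] at h2
      have h3 := hpos (k + 1) (by omega)
      have h4 : y (k + 2) < y (k + 1) := ih (k + 1) (by omega)
      nlinarith
  exact fun k hk => hdec (n - k - 1) k (by omega)

/-- Cutting a pendant path of `a + b + 2` new vertices after its first `a + 1` of them, and
reattaching the rest at `u`, strictly increases `ρ_α`. -/
theorem attach_lt {V : Type*} [Fintype V] [DecidableEq V] {α : ℝ}
    (h0 : 0 ≤ α) (h1 : α < 1) (G : SimpleGraph V) (hconn : G.Connected)
    (hρ : 2 ≤ rhoAlpha α G) (u : V) (a b : ℕ) :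
    rhoAlpha α (attachTwoPaths G u u (a + 1 + (b + 1)) 0) <
      rhoAlpha α (attachTwoPaths G u u (a + 1) (b + 1)) := by
  have := hconn.nonempty
  obtain ⟨f, y, hy0, hpos, hdec, he⟩ :=
    exists_decreasing_perron h0 h1 G hconn hρ u (a + 1 + (b + 1))
  -- `z` lists the same eigenvector along the reattached piece, which now starts at `u`.
  set z : ℕ → ℝ := fun k => if k = 0 then f u else y (a + 1 + k) with hz
  have hz0 : z 0 = f u := by simp [hz]
  have hzs : ∀ k, z (k + 1) = y (a + 1 + (k + 1)) := by simp [hz]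
  have hform := form_pathVec α G u (a + 1 + (b + 1)) 0 f y z hy0 hz0
  have hnorm := normSq_pathVec (a + 1 + (b + 1)) 0 f y z
  have hle := (rhoAlpha_perron h0 h1 (attachTwoPaths G u u (a + 1) (b + 1))).1
    (pathVec f y z (a + 1) (b + 1))
  rw [form_pathVec α G u _ _ f y z hy0 hz0, normSq_pathVec] at hle
  rw [he z, dotProduct_smul, smul_eq_mul, hnorm] at hform
  simp only [Finset.range_zero, Finset.sum_empty, add_zero] at hform
  rw [Finset.sum_range_add _ (a + 1) (b + 1), Finset.sum_range_add _ (a + 1) (b + 1)] at hform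
  have hzy : ∑ i ∈ Finset.range (b + 1), z (i + 1) ^ 2 =
      ∑ i ∈ Finset.range (b + 1), y (a + 1 + i + 1) ^ 2 :=
    Finset.sum_congr rfl fun i _ => by rw [hzs, add_assoc (a + 1)]
  rw [hzy] at hle
  have hedge : ∑ i ∈ Finset.range (b + 1), edgeForm α (y (a + 1 + i)) (y (a + 1 + i + 1)) <
      ∑ i ∈ Finset.range (b + 1), edgeForm α (z i) (z (i + 1)) := by
    -- Only the moved edge, the term of index `0`, differs.
    rw [Finset.sum_range_succ', Finset.sum_range_succ']
    refine add_lt_add_of_le_of_lt (le_of_eq ?_) ?_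
    · refine Finset.sum_congr rfl fun i _ => ?_
      rw [hzs, hzs]
      rfl
    · rw [hzs, hz0, ← hy0]
      have hanti : ∀ k ≤ a, y (k + 1) < y 0 := by
        intro k
        induction k with
        | zero => exact fun _ => hdec 0 (by omega)
        | succ k ih => exact fun hk => (hdec (k + 1) (by omega)).trans (ih (by omega))
      exact edgeForm_lt h0 h1 (hpos _ (by omega)).le (hanti a le_rfl) (hpos _ (by omega))
  set N := f ⬝ᵥ f + (∑ i ∈ Finset.range (a + 1), y (i + 1) ^ 2 +
    ∑ i ∈ Finset.range (b + 1), y (a + 1 + i + 1) ^ 2) with hN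
  have hN0 : 0 ≤ N := by
    have : 0 ≤ f ⬝ᵥ f := by simpa using dotProduct_star_self_nonneg f
    positivity
  refine lt_of_mul_lt_mul_right ?_ hN0
  linarith

end Helpers

/-- Let `α ∈ [0,1)`, `G` a connected graph with `ρ_α(G) ≥ 2`,
and `u ∈ V(G)`. If `q ≥ 1` and `p ≥ q`, then
`ρ_α(G_{p,q}(u)) ≥ ρ_α(G_{p+q−1,1}(u))`, with equality if and only if `q = 1`.
Here `G_{p,q}(u) = attachTwoPaths G u u (p-1) (q-1)` and
`G_{p+q−1,1}(u) = attachTwoPaths G u u (p+q-2) 0`. -/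
theorem two_paths_vs_one_path (α : ℝ) (hα0 : 0 ≤ α) (hα1 : α < 1)
    {V : Type*} [Fintype V] [DecidableEq V] (G : SimpleGraph V)
    (hconn : G.Connected) (hρ : 2 ≤ rhoAlpha α G)
    (u : V) (p q : ℕ) (hq : 1 ≤ q) (hpq : q ≤ p) :
    rhoAlpha α (attachTwoPaths G u u (p + q - 2) 0) ≤
        rhoAlpha α (attachTwoPaths G u u (p - 1) (q - 1)) ∧
      (rhoAlpha α (attachTwoPaths G u u (p - 1) (q - 1)) =
          rhoAlpha α (attachTwoPaths G u u (p + q - 2) 0) ↔ q = 1) := by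
  have hn : p + q - 2 = (p - 1) + (q - 1) := by omega
  rw [hn]
  obtain ⟨a, ha⟩ : ∃ a, p - 1 = a := ⟨_, rfl⟩
  obtain ⟨b, hb⟩ : ∃ b, q - 1 = b := ⟨_, rfl⟩
  rw [ha, hb]
  rcases b with _ | b
  · exact ⟨le_rfl, fun _ => by omega, fun _ => rfl⟩
  · obtain ⟨a, rfl⟩ : ∃ c, a = c + 1 := ⟨a - 1, by omega⟩
    have h := attach_lt hα0 hα1 G hconn hρ u a b
    exact ⟨h.le, fun h' => absurd h' h.ne', fun h' => by omega⟩
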